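/- Let (X,d) be a compact metric space and E ⊆ X a compact subset. For s ≥ 0 and ε > 0 define B_ε^s(E,d) = inf{ Σ_{n=1}^m (diam B_n)^s : {B_n}_{n=1}^m is a finite cover of E by open balls with diam(B_n) ≤ ε }, and dim*_H(E,d,ε) = sup{ s ≥ 0 : B_ε^s(E,d) ≥ 1 }. Then lim_{ε→0} dim*_H(E,d,ε) = lim_{ε→0} dim_H(E,d,ε), i.e. the limit of dim*_H(E,d,ε) as ε → 0 equals the Hausdorff dimension of (E,d). -/

import Mathlib

/-!
Two comparisons sandwich `dim*_H`. A ball cover of scale `ε` is a countable cover of any scale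
`δ > ε`, so `dim_H(E,d,δ) ≤ dim*_H(E,d,ε)`. Conversely, a nonempty set of diameter `a < δ` lies in
a ball of radius slightly larger than `a`, whose diameter is at most about `2a`; compactness makes
the resulting cover finite, so `B_{2δ}^s ≤ 2^s H_δ^s ≤ 2^s δ^{s-t} H_δ^t`. For `t < s` the factor
`2^s δ^{s-t}` tends to `0`, so doubling the diameters does not change the critical exponent in the
limit.
-/

open Filter Set Topology
open scoped ENNReal

namespace MeanDim6

/-- The `s`-dimensional Hausdorff pre-measure of `E ⊆ X` at scale `δ`
(countable covers; conventions `0^0 = 1` for nonempty sets, `diam(∅)^s = 0`). -/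
noncomputable def hMeasure {X : Type*} [MetricSpace X] (E : Set X) (s δ : ℝ) : ℝ≥0∞ :=
  open scoped Classical in
  ⨅ (C : ℕ → Set X) (_ : E ⊆ ⋃ i, C i) (_ : ∀ i, Metric.diam (C i) < δ),
    ∑' i, if (C i).Nonempty then ENNReal.ofReal (Metric.diam (C i) ^ s) else 0

/-- `dim_H(E,d,δ) = sup { s ≥ 0 : H_δ^s(E,d) ≥ 1 }`. -/
noncomputable def dimHScale {X : Type*} [MetricSpace X] (E : Set X) (δ : ℝ) : ℝ≥0∞ :=
  ⨆ (s : ℝ) (_ : 0 ≤ s) (_ : 1 ≤ hMeasure E s δ), ENNReal.ofReal s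

/-- `B_ε^s(E,d)`: infimum of `Σ (diam B_n)^s` over finite covers of `E` by open balls
of diameter at most `ε`. -/
noncomputable def ballMeasure {X : Type*} [MetricSpace X] (E : Set X) (s ε : ℝ) : ℝ≥0∞ :=
  ⨅ (m : ℕ) (c : Fin m → X) (r : Fin m → ℝ)
    (_ : E ⊆ ⋃ i, Metric.ball (c i) (r i))
    (_ : ∀ i, Metric.diam (Metric.ball (c i) (r i)) ≤ ε),
    ∑ i, ENNReal.ofReal (Metric.diam (Metric.ball (c i) (r i)) ^ s)

/-- `dim*_H(E,d,ε) = sup { s ≥ 0 : B_ε^s(E,d) ≥ 1 }`. -/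
noncomputable def dimHStar {X : Type*} [MetricSpace X] (E : Set X) (ε : ℝ) : ℝ≥0∞ :=
  ⨆ (s : ℝ) (_ : 0 ≤ s) (_ : 1 ≤ ballMeasure E s ε), ENNReal.ofReal s

section CriticalExponent

/-- The exponent at which a family `μ s` of premeasures drops below `1`. Both `dim_H(E,d,δ)` and
`dim*_H(E,d,ε)` are critical exponents, definitionally. -/
noncomputable def criticalExponent (μ : ℝ → ℝ≥0∞) : ℝ≥0∞ :=
  ⨆ (s : ℝ) (_ : 0 ≤ s) (_ : 1 ≤ μ s), ENNReal.ofReal s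

theorem criticalExponent_mono : Monotone criticalExponent := fun _ _ hμν =>
  iSup_mono fun s => iSup_mono fun _ => iSup_mono' fun h => ⟨h.trans (hμν s), le_rfl⟩

theorem ofReal_le_criticalExponent {μ : ℝ → ℝ≥0∞} {s : ℝ} (hs : 0 ≤ s) (h : 1 ≤ μ s) :
    ENNReal.ofReal s ≤ criticalExponent μ :=
  le_iSup_of_le s (le_iSup_of_le hs (le_iSup_of_le h le_rfl))

theorem criticalExponent_le_of_forall_lt {μ : ℝ → ℝ≥0∞} {a : ℝ≥0∞}
    (h : ∀ s t, 0 ≤ t → t < s → 1 ≤ μ s → ENNReal.ofReal t ≤ a) : criticalExponent μ ≤ a := by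
  refine iSup_le fun s => iSup_le fun _ => iSup_le fun hμ => ?_
  refine le_of_forall_lt_imp_le_of_dense fun b hb => ?_
  have hbs : b.toReal < s := (ENNReal.lt_ofReal_iff_toReal_lt hb.ne_top).1 hb
  simpa only [ENNReal.ofReal_toReal hb.ne_top] using h s b.toReal ENNReal.toReal_nonneg hbs hμ

end CriticalExponent

theorem tendsto_mul_rpow_nhdsGT_zero (c : ℝ) {p : ℝ} (hp : 0 < p) :
    Tendsto (fun x : ℝ => c * x ^ p) (𝓝[>] 0) (𝓝 0) := by
  have hcont : Continuous fun x : ℝ => c * x ^ p :=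
    continuous_const.mul (Real.continuous_rpow_const hp.le)
  simpa only [Real.zero_rpow hp.ne', mul_zero] using (hcont.tendsto 0).mono_left nhdsWithin_le_nhds

theorem exists_ball_superset_diam_rpow_le {X : Type*} [PseudoMetricSpace X] {C : Set X}
    (hC : C.Nonempty) (hbdd : Bornology.IsBounded C) {s δ η : ℝ} (hs : 0 ≤ s)
    (hδ : Metric.diam C < δ) (hη : 0 < η) :
    ∃ x r, C ⊆ Metric.ball x r ∧ Metric.diam (Metric.ball x r) ≤ 2 * δ ∧
      Metric.diam (Metric.ball x r) ^ s ≤ 2 ^ s * Metric.diam C ^ s + η := by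
  obtain ⟨x, hx⟩ := hC
  have hcont : Continuous fun r : ℝ => (2 * r) ^ s :=
    (Real.continuous_rpow_const hs).comp (continuous_const_mul 2)
  have hnear : ∀ᶠ r in 𝓝[>] Metric.diam C, (2 * r) ^ s < (2 * Metric.diam C) ^ s + η :=
    nhdsWithin_le_nhds (hcont.tendsto _ |>.eventually_lt_const (lt_add_of_pos_right _ hη))
  obtain ⟨r, hr, hCr, hrδ⟩ := (hnear.and (Ioo_mem_nhdsGT hδ)).exists
  have hdiam : Metric.diam (Metric.ball x r) ≤ 2 * r :=
    Metric.diam_ball (Metric.diam_nonneg.trans hCr.le)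
  refine ⟨x, r, fun y hy => (Metric.dist_le_diam_of_mem hbdd hy hx).trans_lt hCr,
    by linarith, ?_⟩
  calc Metric.diam (Metric.ball x r) ^ s
      ≤ (2 * r) ^ s := Real.rpow_le_rpow Metric.diam_nonneg hdiam hs
    _ ≤ (2 * Metric.diam C) ^ s + η := hr.le
    _ = 2 ^ s * Metric.diam C ^ s + η := by rw [Real.mul_rpow zero_le_two Metric.diam_nonneg]

section Premeasures

variable {X : Type*} [MetricSpace X] {E : Set X} {s t δ ε : ℝ}

theorem hMeasure_anti (E : Set X) (s : ℝ) : Antitone (hMeasure E s) := fun _ _ hab =>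
  iInf_mono fun _ => iInf_mono fun _ => iInf_mono' fun h => ⟨fun i => (h i).trans_le hab, le_rfl⟩

theorem ballMeasure_anti (E : Set X) (s : ℝ) : Antitone (ballMeasure E s) := fun _ _ hab =>
  iInf_mono fun _ => iInf_mono fun _ => iInf_mono fun _ => iInf_mono fun _ =>
    iInf_mono' fun h => ⟨fun i => (h i).trans hab, le_rfl⟩

theorem hMeasure_le_tsum {ι : Type*} [Countable ι] {C : ι → Set X} (hδ : 0 < δ)
    (hcover : E ⊆ ⋃ i, C i) (hdiam : ∀ i, Metric.diam (C i) < δ) :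
    hMeasure E s δ ≤ ∑' i, ENNReal.ofReal (Metric.diam (C i) ^ s) := by
  classical
  have := Encodable.ofCountable ι
  let D : ℕ → Set X := fun n => ⋃ i ∈ Encodable.decode₂ ι n, C i
  have hD : E ⊆ ⋃ n, D n := by rwa [Encodable.iUnion_decode₂]
  have hDdiam : ∀ n, Metric.diam (D n) < δ := fun n =>
    Encodable.iUnion_decode₂_cases (C := fun A => Metric.diam A < δ)
      (by rwa [Metric.diam_empty]) hdiam
  calc hMeasure E s δ
      ≤ ∑' n, if (D n).Nonempty then ENNReal.ofReal (Metric.diam (D n) ^ s) else 0 :=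
        iInf_le_of_le D (iInf_le_of_le hD (iInf_le_of_le hDdiam (by convert le_rfl)))
    _ = ∑' i, if (C i).Nonempty then ENNReal.ofReal (Metric.diam (C i) ^ s) else 0 :=
        tsum_iUnion_decode₂
          (fun A : Set X => if A.Nonempty then ENNReal.ofReal (Metric.diam A ^ s) else 0)
          (if_neg Set.not_nonempty_empty) C
    _ ≤ ∑' i, ENNReal.ofReal (Metric.diam (C i) ^ s) :=
        ENNReal.tsum_le_tsum fun i => by split_ifs <;> simp

theorem hMeasure_le_ballMeasure (E : Set X) (s : ℝ) (hδ : 0 < δ) (hεδ : ε < δ) :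
    hMeasure E s δ ≤ ballMeasure E s ε := by
  refine le_iInf fun m => le_iInf fun c => le_iInf fun r => le_iInf fun hcover =>
    le_iInf fun hdiam => ?_
  simpa only [tsum_fintype] using hMeasure_le_tsum hδ hcover fun i => (hdiam i).trans_lt hεδ

theorem hMeasure_le_rpow_sub_mul_hMeasure (E : Set X) (hδ : 0 < δ) (ht : 0 ≤ t) (hts : t ≤ s) :
    hMeasure E s δ ≤ ENNReal.ofReal (δ ^ (s - t)) * hMeasure E t δ := by
  have hfactor : ENNReal.ofReal (δ ^ (s - t)) ≠ 0 := by
    simpa using Real.rpow_pos_of_pos hδ (s - t)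
  have hpow : ∀ a : ℝ, 0 ≤ a → a < δ → a ^ s ≤ δ ^ (s - t) * a ^ t := fun a ha haδ =>
    calc a ^ s = a ^ (s - t) * a ^ t := by
          rw [← Real.rpow_add_of_nonneg ha (sub_nonneg.2 hts) ht, sub_add_cancel]
      _ ≤ δ ^ (s - t) * a ^ t := by gcongr
  simp only [hMeasure, ENNReal.mul_iInf_of_ne hfactor ENNReal.ofReal_ne_top]
  refine iInf_mono fun C => iInf_mono fun _ => iInf_mono fun hdiam => ?_
  rw [← ENNReal.tsum_mul_left]
  refine ENNReal.tsum_le_tsum fun i => ?_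
  split_ifs
  · rw [← ENNReal.ofReal_mul (by positivity)]
    exact ENNReal.ofReal_le_ofReal (hpow _ Metric.diam_nonneg (hdiam i))
  · exact zero_le

theorem ballMeasure_le_sum {ι : Type*} [Fintype ι] {c : ι → X} {r : ι → ℝ}
    (hcover : E ⊆ ⋃ i, Metric.ball (c i) (r i))
    (hdiam : ∀ i, Metric.diam (Metric.ball (c i) (r i)) ≤ ε) :
    ballMeasure E s ε ≤ ∑ i, ENNReal.ofReal (Metric.diam (Metric.ball (c i) (r i)) ^ s) := by
  let e := (Fintype.equivFin ι).symm
  rw [← e.surjective.iUnion_comp] at hcover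
  rw [← e.sum_comp]
  exact iInf_le_of_le _ (iInf_le_of_le (c ∘ e) (iInf_le_of_le (r ∘ e)
    (iInf_le_of_le hcover (iInf_le_of_le (fun j => hdiam (e j)) le_rfl))))

theorem ballMeasure_le_tsum (hE : IsCompact E) {ι : Type*} {c : ι → X} {r : ι → ℝ}
    (hcover : E ⊆ ⋃ i, Metric.ball (c i) (r i))
    (hdiam : ∀ i, Metric.diam (Metric.ball (c i) (r i)) ≤ ε) :
    ballMeasure E s ε ≤ ∑' i, ENNReal.ofReal (Metric.diam (Metric.ball (c i) (r i)) ^ s) := by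
  obtain ⟨F, hF⟩ := hE.elim_finite_subcover _ (fun _ => Metric.isOpen_ball) hcover
  rw [← iUnion_subtype (· ∈ F) fun i => Metric.ball (c i) (r i)] at hF
  calc ballMeasure E s ε
      ≤ ∑ i : F, ENNReal.ofReal (Metric.diam (Metric.ball (c i) (r i)) ^ s) :=
        ballMeasure_le_sum hF fun i => hdiam i
    _ = ∑ i ∈ F, ENNReal.ofReal (Metric.diam (Metric.ball (c i) (r i)) ^ s) :=
        Finset.sum_coe_sort F fun i => ENNReal.ofReal (Metric.diam (Metric.ball (c i) (r i)) ^ s)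
    _ ≤ ∑' i, ENNReal.ofReal (Metric.diam (Metric.ball (c i) (r i)) ^ s) := ENNReal.sum_le_tsum F

theorem ballMeasure_two_mul_le_tsum (hE : IsCompact E) (hs : 0 ≤ s) {ι : Type*} [Countable ι]
    {C : ι → Set X} (hcover : E ⊆ ⋃ i, C i) (hne : ∀ i, (C i).Nonempty)
    (hbdd : ∀ i, Bornology.IsBounded (C i)) (hdiam : ∀ i, Metric.diam (C i) < δ) :
    ballMeasure E s (2 * δ) ≤
      ENNReal.ofReal (2 ^ s) * ∑' i, ENNReal.ofReal (Metric.diam (C i) ^ s) := by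
  refine ENNReal.le_of_forall_pos_le_add fun η hη _ => ?_
  obtain ⟨η', hη', hsum⟩ := ENNReal.exists_pos_sum_of_countable (ENNReal.coe_pos.2 hη).ne' ι
  choose x r hball hballdiam hpow using fun i =>
    exists_ball_superset_diam_rpow_le (hne i) (hbdd i) hs (hdiam i) (NNReal.coe_pos.2 (hη' i))
  have hterm : ∀ i, ENNReal.ofReal (Metric.diam (Metric.ball (x i) (r i)) ^ s) ≤
      ENNReal.ofReal (2 ^ s) * ENNReal.ofReal (Metric.diam (C i) ^ s) + η' i := fun i => by
    rw [← ENNReal.ofReal_mul (by positivity), ← ENNReal.ofReal_coe_nnreal,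
      ← ENNReal.ofReal_add (by positivity) (by positivity)]
    exact ENNReal.ofReal_le_ofReal (hpow i)
  calc ballMeasure E s (2 * δ)
      ≤ ∑' i, ENNReal.ofReal (Metric.diam (Metric.ball (x i) (r i)) ^ s) :=
        ballMeasure_le_tsum hE (hcover.trans (iUnion_mono hball)) hballdiam
    _ ≤ ∑' i, (ENNReal.ofReal (2 ^ s) * ENNReal.ofReal (Metric.diam (C i) ^ s) + η' i) :=
        ENNReal.tsum_le_tsum hterm
    _ = ENNReal.ofReal (2 ^ s) * ∑' i, ENNReal.ofReal (Metric.diam (C i) ^ s) + ∑' i, ↑(η' i) := by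
        rw [ENNReal.tsum_add, ENNReal.tsum_mul_left]
    _ ≤ ENNReal.ofReal (2 ^ s) * ∑' i, ENNReal.ofReal (Metric.diam (C i) ^ s) + η := by gcongr

theorem ballMeasure_two_mul_le_hMeasure [BoundedSpace X] (hE : IsCompact E) (hs : 0 ≤ s) (δ : ℝ) :
    ballMeasure E s (2 * δ) ≤ ENNReal.ofReal (2 ^ s) * hMeasure E s δ := by
  have hfactor : ENNReal.ofReal (2 ^ s) ≠ 0 := by
    simpa using Real.rpow_pos_of_pos two_pos s
  simp only [hMeasure, ENNReal.mul_iInf_of_ne hfactor ENNReal.ofReal_ne_top]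
  refine le_iInf fun C => le_iInf fun hcover => le_iInf fun hdiam => ?_
  -- An empty `C i` supplies no centre for a ball, so only the nonempty ones are enlarged.
  let I : Set ℕ := {i | (C i).Nonempty}
  have hcoverI : E ⊆ ⋃ i : I, C i := fun y hy => by
    obtain ⟨i, hi⟩ := mem_iUnion.1 (hcover hy)
    exact mem_iUnion.2 ⟨⟨i, y, hi⟩, hi⟩
  calc ballMeasure E s (2 * δ)
      ≤ ENNReal.ofReal (2 ^ s) * ∑' i : I, ENNReal.ofReal (Metric.diam (C i) ^ s) :=
        ballMeasure_two_mul_le_tsum hE hs hcoverI (fun i => i.2) (fun _ => .all _)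
          fun i => hdiam i
    _ = _ := by
        rw [tsum_subtype I fun i => ENNReal.ofReal (Metric.diam (C i) ^ s)]
        rfl

theorem eventually_one_le_hMeasure [BoundedSpace X] (hE : IsCompact E) (hε : 0 < ε) (ht : 0 ≤ t)
    (hts : t < s) (hball : 1 ≤ ballMeasure E s ε) : ∀ᶠ δ in 𝓝[>] 0, 1 ≤ hMeasure E t δ := by
  have hfactor : ∀ᶠ δ in 𝓝[>] 0, (2 : ℝ) ^ s * δ ^ (s - t) ≤ 1 :=
    (tendsto_mul_rpow_nhdsGT_zero _ (sub_pos.2 hts)).eventually_le_const zero_lt_one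
  filter_upwards [hfactor, Ioo_mem_nhdsGT (half_pos hε)] with δ hδ ⟨hδ0, hδε⟩
  calc 1 ≤ ballMeasure E s ε := hball
    _ ≤ ballMeasure E s (2 * δ) := ballMeasure_anti E s (by linarith)
    _ ≤ ENNReal.ofReal (2 ^ s) * hMeasure E s δ :=
        ballMeasure_two_mul_le_hMeasure hE (ht.trans hts.le) δ
    _ ≤ ENNReal.ofReal (2 ^ s) * (ENNReal.ofReal (δ ^ (s - t)) * hMeasure E t δ) := by
        gcongr
        exact hMeasure_le_rpow_sub_mul_hMeasure E hδ0 ht hts.le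
    _ = ENNReal.ofReal (2 ^ s * δ ^ (s - t)) * hMeasure E t δ := by
        rw [← mul_assoc, ← ENNReal.ofReal_mul (by positivity)]
    _ ≤ hMeasure E t δ := mul_le_of_le_one_left' (ENNReal.ofReal_le_one.2 hδ)

end Premeasures

section Dimensions

variable {X : Type*} [MetricSpace X] {E : Set X} {δ ε : ℝ}

theorem dimHScale_anti (E : Set X) : Antitone (dimHScale E) := fun _ _ hab =>
  criticalExponent_mono fun s => hMeasure_anti E s hab

theorem dimHScale_le_dimHStar (E : Set X) (hδ : 0 < δ) (hεδ : ε < δ) :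
    dimHScale E δ ≤ dimHStar E ε :=
  criticalExponent_mono fun s => hMeasure_le_ballMeasure E s hδ hεδ

theorem dimHStar_le_sSup_dimHScale [BoundedSpace X] (hE : IsCompact E) (hε : 0 < ε) :
    dimHStar E ε ≤ sSup (dimHScale E '' Ioi 0) := by
  refine criticalExponent_le_of_forall_lt fun s t ht hts hball => ?_
  obtain ⟨δ, hδ, hδ0⟩ :=
    ((eventually_one_le_hMeasure hE hε ht hts hball).and self_mem_nhdsWithin).exists
  exact (ofReal_le_criticalExponent (μ := (hMeasure E · δ)) ht hδ).trans
    (le_sSup (mem_image_of_mem _ hδ0))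

end Dimensions

theorem dimHStar_lim_eq_dimH_lim_general {X : Type*} [MetricSpace X] [BoundedSpace X]
    (E : Set X) (hE : IsCompact E) :
    ∃ l : ℝ≥0∞,
      Tendsto (fun ε : ℝ => dimHStar E ε) (𝓝[>] (0 : ℝ)) (𝓝 l) ∧
      Tendsto (fun ε : ℝ => dimHScale E ε) (𝓝[>] (0 : ℝ)) (𝓝 l) := by
  have hlim : Tendsto (dimHScale E) (𝓝[>] 0) (𝓝 (sSup (dimHScale E '' Ioi 0))) :=
    (dimHScale_anti E).tendsto_nhdsGT 0
  have hdouble : Tendsto (fun ε : ℝ => 2 * ε) (𝓝[>] 0) (𝓝[>] 0) :=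
    tendsto_iff_comap.2 (comap_mulLeft_nhdsGT_zero two_pos).ge
  refine ⟨_, ?_, hlim⟩
  refine tendsto_of_tendsto_of_tendsto_of_le_of_le' (hlim.comp hdouble) tendsto_const_nhds ?_ ?_
  · filter_upwards [self_mem_nhdsWithin] with ε (hε : 0 < ε)
    exact dimHScale_le_dimHStar E (by linarith) (by linarith)
  · filter_upwards [self_mem_nhdsWithin] with ε hε
    exact dimHStar_le_sSup_dimHScale hE hε

/-- `lim_{ε→0} dim*_H(E,d,ε) = lim_{ε→0} dim_H(E,d,ε)`:
both limits exist and coincide. -/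
theorem dimHStar_lim_eq_dimH_lim {X : Type*} [MetricSpace X] [CompactSpace X]
    (E : Set X) (hE : IsCompact E) :
    ∃ l : ℝ≥0∞,
      Tendsto (fun ε : ℝ => dimHStar E ε) (𝓝[>] (0 : ℝ)) (𝓝 l) ∧
      Tendsto (fun ε : ℝ => dimHScale E ε) (𝓝[>] (0 : ℝ)) (𝓝 l) :=
  dimHStar_lim_eq_dimH_lim_general E hE

end MeanDim6
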